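/- arXiv:1509.08278 — 3 statements merged into one kernel-verified Lean document; each statement's English description precedes it below -/
import Mathlib

section
/- Let G be a countable discrete group with a p.m.p. action σ on a probability space (X, ν) such that the diagonal action σ² : G ↷ (X², ν²) is weakly mixing and 𝕋-cocycle superrigid. Then the natural group homomorphism Ψ₂ : H²(G, 𝕋) → H²(G ↷ X; 𝕋), induced by sending a 2-cocycle c : G² → 𝕋 to the measurable 2-cocycle (g, h, x) ↦ c(g, h), is injective. Equivalently, if a 2-cocycle c : G² → 𝕋 admits a measurable map b : G × X → 𝕋 with c(g, h) = b(g, x)·b(h, g⁻¹x)·b(gh, x)⁻¹ for ν-a.e. x (all g, h ∈ G), then c is a 2-coboundary, i.e., c(g, h) = μ(g)⁻¹·μ(h)⁻¹·μ(gh) for some map μ : G → 𝕋. -/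
open MeasureTheory

noncomputable section

namespace AlgActCohomology

/-- The Borel σ-algebra on the circle group `𝕋 = {z ∈ ℂ : |z| = 1}`. -/
noncomputable instance : MeasurableSpace Circle := borel Circle
instance : BorelSpace Circle := ⟨rfl⟩

variable {G X : Type*}

/-- The diagonal action on a product. -/
def diag (a : G → X → X) : G → X × X → X × X := fun g p => (a g p.1, a g p.2)

/-- An action is ergodic if every measurable set invariant under every group element
has measure 0 or 1. -/
def IsErgodicAction [MeasurableSpace X] (a : G → X → X) (μ : Measure X) : Prop :=
  ∀ s : Set X, MeasurableSet s → (∀ g : G, a g ⁻¹' s = s) → μ s = 0 ∨ μ s = 1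

/-- An action is weakly mixing if the diagonal action on the square
(with the product measure) is ergodic. -/
def IsWeaklyMixing [MeasurableSpace X] (a : G → X → X) (μ : Measure X) : Prop :=
  IsErgodicAction (diag a) (μ.prod μ)

/-- A (p.m.p.) group action: `a : G → X → X` is an action of `G` and every `a g`
is measure preserving. -/
structure IsPmpAction [Group G] [MeasurableSpace X] (a : G → X → X) (μ : Measure X) :
    Prop where
  act_one : ∀ x, a 1 x = x
  act_mul : ∀ g h x, a (g * h) x = a g (a h x)
  measurePreserving : ∀ g, MeasurePreserving (a g) μ μ

/-- An algebraic action: an action of `G` by continuous (automatically bijective)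
additive automorphisms of a compact abelian group `X`. -/
structure IsAlgebraicAction [Group G] [AddCommGroup X] [TopologicalSpace X]
    (a : G → X → X) : Prop where
  act_one : ∀ x, a 1 x = x
  act_mul : ∀ g h x, a (g * h) x = a g (a h x)
  continuous : ∀ g, Continuous (a g)
  act_add : ∀ g x y, a g (x + y) = a g x + a g y

/-- A measurable `𝕋`-valued 1-cocycle for an action. -/
def IsCocycle1 [Group G] [MeasurableSpace X] (a : G → X → X) (μ : Measure X)
    (c : G → X → Circle) : Prop :=
  (∀ g, Measurable (c g)) ∧ ∀ g h : G, ∀ᵐ x ∂μ, c (g * h) x = c g x * c h (a g⁻¹ x)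

/-- An action is `𝕋`-cocycle superrigid if every measurable `𝕋`-valued 1-cocycle is
cohomologous to a group homomorphism `G → 𝕋`. -/
def IsCocycleSuperrigid [Group G] [MeasurableSpace X] (a : G → X → X) (μ : Measure X) :
    Prop :=
  ∀ c : G → X → Circle, IsCocycle1 a μ c →
    ∃ (lam : G →* Circle) (b : X → Circle), Measurable b ∧
      ∀ g : G, ∀ᵐ x ∂μ, c g x = lam g * (b (a g⁻¹ x) * (b x)⁻¹)

section Char

variable (X) [AddCommGroup X] [TopologicalSpace X]

/-- The Pontryagin dual `X̂` of a compact abelian group `X`: the group of continuous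
characters `X → 𝕋`, as a subgroup of the group of all functions `X → 𝕋`. -/
def charGroup : Subgroup (X → Circle) where
  carrier := {χ | Continuous χ ∧ ∀ x y, χ (x + y) = χ x * χ y}
  one_mem' := ⟨continuous_const, fun _ _ => (one_mul 1).symm⟩
  mul_mem' := fun h1 h2 => ⟨h1.1.mul h2.1, fun x y => by
    simp only [Pi.mul_apply, h1.2 x y, h2.2 x y]; exact mul_mul_mul_comm _ _ _ _⟩
  inv_mem' := fun h => ⟨h.1.inv, fun x y => by
    simp only [Pi.inv_apply, h.2 x y, mul_inv]⟩

end Char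

section Degree1

variable [Group G] [AddCommGroup X] [TopologicalSpace X]

/-- `Z¹(G, X̂)`: 1-cocycles of `G` with coefficients in the dual module `X̂`,
where `(g • χ) x = χ (a g⁻¹ x)`. -/
def modZ1 (a : G → X → X) : Subgroup (G → charGroup X) where
  carrier := {c | ∀ (g h : G) (x : X),
    ((c (g * h) : X → Circle)) x = (c h : X → Circle) (a g⁻¹ x) * (c g : X → Circle) x}
  one_mem' := by
    intro g h x
    simp
  mul_mem' := by
    intro c₁ c₂ h1 h2 g h x
    simp only [Pi.mul_apply, Subgroup.coe_mul]
    rw [h1 g h x, h2 g h x]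
    ac_rfl
  inv_mem' := by
    intro c hc g h x
    simp only [Pi.inv_apply, InvMemClass.coe_inv]
    rw [hc g h x, mul_inv]

/-- `B¹(G, X̂)`: 1-coboundaries. -/
def modB1 (a : G → X → X) : Subgroup (G → charGroup X) where
  carrier := {c | ∃ χ : charGroup X, ∀ (g : G) (x : X),
    (c g : X → Circle) x = (χ : X → Circle) (a g⁻¹ x) * ((χ : X → Circle) x)⁻¹}
  one_mem' := ⟨1, by intro g x; simp⟩
  mul_mem' := by
    rintro c₁ c₂ ⟨χ₁, h1⟩ ⟨χ₂, h2⟩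
    refine ⟨χ₁ * χ₂, fun g x => ?_⟩
    simp only [Pi.mul_apply, Subgroup.coe_mul]
    rw [h1 g x, h2 g x, mul_inv]
    ac_rfl
  inv_mem' := by
    rintro c ⟨χ, h⟩
    refine ⟨χ⁻¹, fun g x => ?_⟩
    simp only [Pi.inv_apply, InvMemClass.coe_inv]
    rw [h g x, mul_inv, inv_inv]

variable [MeasurableSpace X]

/-- Measurable `𝕋`-valued 1-cocycles for an action, as a subgroup of all maps
`G → X → 𝕋`. -/
def measZ1 (a : G → X → X) (μ : Measure X) : Subgroup (G → X → Circle) where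
  carrier := {c | (∀ g, Measurable (c g)) ∧
    ∀ g h : G, ∀ᵐ x ∂μ, c (g * h) x = c g x * c h (a g⁻¹ x)}
  one_mem' := ⟨fun _ => measurable_const, fun g h => ae_of_all _ fun x => by simp⟩
  mul_mem' := by
    rintro c₁ c₂ ⟨m1, h1⟩ ⟨m2, h2⟩
    refine ⟨fun g => (m1 g).mul (m2 g), fun g h => ?_⟩
    filter_upwards [h1 g h, h2 g h] with x e1 e2
    simp only [Pi.mul_apply]
    rw [e1, e2]
    ac_rfl
  inv_mem' := by
    rintro c ⟨m, hc⟩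
    refine ⟨fun g => (m g).inv, fun g h => ?_⟩
    filter_upwards [hc g h] with x e
    simp only [Pi.inv_apply]
    rw [e, mul_inv]

/-- The subgroup of measurable 1-cocycles that are cohomologous to (the cocycle
induced by) a group homomorphism `G → 𝕋`; this is the preimage in `Z¹(G ↷ X; 𝕋)` of
the subgroup `Ψ₁(H¹(G, 𝕋))` of `H¹(G ↷ X; 𝕋)`, so that
`H¹(G ↷ X; 𝕋)/Ψ₁(H¹(G, 𝕋)) = measZ1 ⧸ measBPsi1`. -/
def measBPsi1 (a : G → X → X) (μ : Measure X) : Subgroup (G → X → Circle) where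
  carrier := {c | ∃ (φ : G →* Circle) (b : X → Circle), Measurable b ∧
    ∀ g : G, ∀ᵐ x ∂μ, c g x = φ g * (b (a g⁻¹ x) * (b x)⁻¹)}
  one_mem' := ⟨1, 1, measurable_const, fun g => ae_of_all _ fun x => by simp⟩
  mul_mem' := by
    rintro c₁ c₂ ⟨φ₁, b₁, hb₁, h1⟩ ⟨φ₂, b₂, hb₂, h2⟩
    refine ⟨φ₁ * φ₂, b₁ * b₂, hb₁.mul hb₂, fun g => ?_⟩
    filter_upwards [h1 g, h2 g] with x e1 e2
    simp only [Pi.mul_apply, MonoidHom.mul_apply]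
    rw [e1, e2, mul_inv]
    ac_rfl
  inv_mem' := by
    rintro c ⟨φ, b, hb, h⟩
    refine ⟨φ⁻¹, b⁻¹, hb.inv, fun g => ?_⟩
    filter_upwards [h g] with x e
    simp only [Pi.inv_apply, MonoidHom.inv_apply]
    rw [e, mul_inv, mul_inv, inv_inv]

/-- The measurable cocycle induced by a module cocycle: evaluation of characters. -/
def ind1 (c : G → charGroup X) : G → X → Circle := fun g => (c g : X → Circle)

end Degree1

section Degree2

variable [Group G]

/-- A `𝕋`-valued 2-cocycle of the group `G` (for the trivial `G`-module `𝕋`). -/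
def IsGrpCocycle2 (θ : G → G → Circle) : Prop :=
  ∀ g₁ g₂ g₃ : G, θ g₂ g₃ * (θ (g₁ * g₂) g₃)⁻¹ * θ g₁ (g₂ * g₃) * (θ g₁ g₂)⁻¹ = 1

private lemma mul4 {M : Type*} [CommGroup M] {a₁ b₁ c₁ d₁ a₂ b₂ c₂ d₂ : M}
    (h₁ : a₁ * b₁⁻¹ * c₁ * d₁⁻¹ = 1) (h₂ : a₂ * b₂⁻¹ * c₂ * d₂⁻¹ = 1) :
    (a₁ * a₂) * (b₁ * b₂)⁻¹ * (c₁ * c₂) * (d₁ * d₂)⁻¹ = 1 := by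
  have e : (a₁ * a₂) * (b₁ * b₂)⁻¹ * (c₁ * c₂) * (d₁ * d₂)⁻¹
      = (a₁ * b₁⁻¹ * c₁ * d₁⁻¹) * (a₂ * b₂⁻¹ * c₂ * d₂⁻¹) := by
    simp only [mul_inv]; ac_rfl
  rw [e, h₁, h₂, one_mul]

private lemma inv4 {M : Type*} [CommGroup M] {a b c d : M}
    (h : a * b⁻¹ * c * d⁻¹ = 1) : a⁻¹ * b * c⁻¹ * d = 1 := by
  have e : a⁻¹ * b * c⁻¹ * d = (a * b⁻¹ * c * d⁻¹)⁻¹ := by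
    simp only [mul_inv, inv_inv]; try ac_rfl
  rw [e, h, inv_one]

variable [AddCommGroup X] [TopologicalSpace X]

/-- `Z²(G, X̂)`: 2-cocycles of `G` with coefficients in the dual module `X̂`. -/
def modZ2 (a : G → X → X) : Subgroup (G → G → charGroup X) where
  carrier := {c | ∀ (g₁ g₂ g₃ : G) (x : X),
    (c g₂ g₃ : X → Circle) (a g₁⁻¹ x) * ((c (g₁ * g₂) g₃ : X → Circle) x)⁻¹ *
      (c g₁ (g₂ * g₃) : X → Circle) x * ((c g₁ g₂ : X → Circle) x)⁻¹ = 1}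
  one_mem' := by intro g₁ g₂ g₃ x; simp
  mul_mem' := by
    intro c₁ c₂ h1 h2 g₁ g₂ g₃ x
    simp only [Pi.mul_apply, Subgroup.coe_mul]
    exact mul4 (h1 g₁ g₂ g₃ x) (h2 g₁ g₂ g₃ x)
  inv_mem' := by
    intro c hc g₁ g₂ g₃ x
    simp only [Pi.inv_apply, InvMemClass.coe_inv, inv_inv]
    exact inv4 (hc g₁ g₂ g₃ x)

/-- `B²(G, X̂)`: 2-coboundaries. -/
def modB2 (a : G → X → X) : Subgroup (G → G → charGroup X) where
  carrier := {c | ∃ b : G → charGroup X, ∀ (g h : G) (x : X),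
    (c g h : X → Circle) x =
      (b h : X → Circle) (a g⁻¹ x) * ((b (g * h) : X → Circle) x)⁻¹ * (b g : X → Circle) x}
  one_mem' := ⟨1, by intro g h x; simp⟩
  mul_mem' := by
    rintro c₁ c₂ ⟨b₁, h1⟩ ⟨b₂, h2⟩
    refine ⟨b₁ * b₂, fun g h x => ?_⟩
    simp only [Pi.mul_apply, Subgroup.coe_mul]
    rw [h1 g h x, h2 g h x, mul_inv]
    try ac_rfl
  inv_mem' := by
    rintro c ⟨b, hb⟩
    refine ⟨b⁻¹, fun g h x => ?_⟩
    simp only [Pi.inv_apply, InvMemClass.coe_inv]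
    rw [hb g h x]
    simp only [mul_inv, inv_inv]
    try ac_rfl

variable [MeasurableSpace X]

/-- Measurable `𝕋`-valued 2-cocycles for an action. -/
def measZ2 (a : G → X → X) (μ : Measure X) : Subgroup (G → G → X → Circle) where
  carrier := {c | (∀ g h, Measurable (c g h)) ∧
    ∀ g₁ g₂ g₃ : G, ∀ᵐ x ∂μ,
      c g₂ g₃ (a g₁⁻¹ x) * (c (g₁ * g₂) g₃ x)⁻¹ * c g₁ (g₂ * g₃) x * (c g₁ g₂ x)⁻¹ = 1}
  one_mem' := ⟨fun _ _ => measurable_const, fun g₁ g₂ g₃ => ae_of_all _ fun x => by simp⟩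
  mul_mem' := by
    rintro c₁ c₂ ⟨m1, h1⟩ ⟨m2, h2⟩
    refine ⟨fun g h => (m1 g h).mul (m2 g h), fun g₁ g₂ g₃ => ?_⟩
    filter_upwards [h1 g₁ g₂ g₃, h2 g₁ g₂ g₃] with x e1 e2
    simp only [Pi.mul_apply]
    exact mul4 e1 e2
  inv_mem' := by
    rintro c ⟨m, hc⟩
    refine ⟨fun g h => (m g h).inv, fun g₁ g₂ g₃ => ?_⟩
    filter_upwards [hc g₁ g₂ g₃] with x e
    simp only [Pi.inv_apply, inv_inv]
    exact inv4 e

/-- The subgroup of measurable 2-cocycles that are cohomologous to a constant (in the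
space variable) 2-cocycle coming from a group 2-cocycle `θ : G² → 𝕋`; this is the
preimage in `Z²(G ↷ X; 𝕋)` of the subgroup `Ψ₂(H²(G, 𝕋))` of `H²(G ↷ X; 𝕋)`, so that
`H²(G ↷ X; 𝕋)/Ψ₂(H²(G, 𝕋)) = measZ2 ⧸ measBPsi2`. -/
def measBPsi2 (a : G → X → X) (μ : Measure X) : Subgroup (G → G → X → Circle) where
  carrier := {c | ∃ (θ : G → G → Circle) (b : G → X → Circle), IsGrpCocycle2 θ ∧
    (∀ g, Measurable (b g)) ∧
    ∀ g h : G, ∀ᵐ x ∂μ, c g h x = θ g h * (b h (a g⁻¹ x) * (b (g * h) x)⁻¹ * b g x)}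
  one_mem' := ⟨fun _ _ => 1, fun _ => 1, fun g₁ g₂ g₃ => by simp, fun _ => measurable_const,
    fun g h => ae_of_all _ fun x => by simp⟩
  mul_mem' := by
    rintro c₁ c₂ ⟨θ₁, b₁, hθ₁, hb₁, h1⟩ ⟨θ₂, b₂, hθ₂, hb₂, h2⟩
    refine ⟨fun g h => θ₁ g h * θ₂ g h, fun g => b₁ g * b₂ g,
      fun g₁ g₂ g₃ => mul4 (hθ₁ g₁ g₂ g₃) (hθ₂ g₁ g₂ g₃),
      fun g => (hb₁ g).mul (hb₂ g), fun g h => ?_⟩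
    filter_upwards [h1 g h, h2 g h] with x e1 e2
    simp only [Pi.mul_apply]
    rw [e1, e2]
    simp only [mul_inv]
    ac_rfl
  inv_mem' := by
    rintro c ⟨θ, b, hθ, hb, hc⟩
    refine ⟨fun g h => (θ g h)⁻¹, fun g => (b g)⁻¹,
      fun g₁ g₂ g₃ => by simpa only [inv_inv] using inv4 (hθ g₁ g₂ g₃),
      fun g => (hb g).inv, fun g h => ?_⟩
    filter_upwards [hc g h] with x e
    simp only [Pi.inv_apply]
    rw [e]
    simp only [mul_inv, inv_inv]
    try ac_rfl

/-- The measurable 2-cocycle induced by a module 2-cocycle: evaluation of characters. -/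
def ind2 (c : G → G → charGroup X) : G → G → X → Circle := fun g h => (c g h : X → Circle)

end Degree2


lemma mul_mul_inv_cancel_aux {M : Type*} [CommGroup M] (e u v : M) :
    (e * u) * (e * v)⁻¹ = u * v⁻¹ := by
  rw [← div_eq_mul_inv, ← div_eq_mul_inv, mul_div_mul_left_eq_div]

/-- An a.e.-invariant measurable circle-valued function for an ergodic action of a countable
group is a.e. constant. -/
lemma ae_const_of_ergodic {G Y : Type*} [Group G] [Countable G] [MeasurableSpace Y]
    (μ : Measure Y) [IsProbabilityMeasure μ] (a : G → Y → Y)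
    (act_one : ∀ x, a 1 x = x) (act_mul : ∀ g h x, a (g * h) x = a g (a h x))
    (hmp : ∀ g, MeasurePreserving (a g) μ μ) (herg : IsErgodicAction a μ)
    (F : Y → Circle) (hF : Measurable F) (hinv : ∀ g, ∀ᵐ y ∂μ, F (a g y) = F y) :
    ∃ k, ∀ᵐ y ∂μ, F y = k := by
  have key : ∀ U : Set Circle, MeasurableSet U →
      (∀ᵐ y ∂μ, F y ∈ U) ∨ (∀ᵐ y ∂μ, F y ∉ U) := by
    intro U hU
    have hs : MeasurableSet (⋂ g : G, a g ⁻¹' (F ⁻¹' U)) :=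
      MeasurableSet.iInter fun g => (hmp g).measurable (hF hU)
    have hsi : ∀ g : G, a g ⁻¹' (⋂ g : G, a g ⁻¹' (F ⁻¹' U)) = ⋂ g : G, a g ⁻¹' (F ⁻¹' U) := by
      intro g
      ext y
      simp only [Set.mem_preimage, Set.mem_iInter, ← act_mul]
      constructor
      · intro h k
        simpa using h (k * g⁻¹)
      · intro h k
        exact h _
    have hall : ∀ᵐ y ∂μ, ∀ g, F (a g y) = F y := ae_all_iff.2 hinv
    rcases herg _ hs hsi with h0 | h1
    · right
      have h0' := measure_eq_zero_iff_ae_notMem.1 h0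
      filter_upwards [h0', hall] with y hy hy2 hU'
      apply hy
      simp only [Set.mem_preimage, Set.mem_iInter]
      intro g
      rw [hy2 g]
      exact hU'
    · left
      have h1' := (mem_ae_iff_prob_eq_one hs).2 h1
      filter_upwards [h1'] with y hy
      have := Set.mem_iInter.1 hy 1
      simpa [act_one] using this
  have := Filter.exists_eventuallyEq_const_of_forall_separating (l := ae μ) (f := F)
    MeasurableSet key
  exact this

/-- If the diagonal action on `(X², ν²)` is weakly mixing and
`𝕋`-cocycle superrigid, then the natural map `Ψ₂ : H²(G, 𝕋) → H²(G ↷ X; 𝕋)` is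
injective: if a group 2-cocycle `c : G² → 𝕋`, viewed as a constant-in-`x` measurable
2-cocycle, is a measurable 2-coboundary, then `c` is a 2-coboundary of the group. -/
theorem psi2_injective_of_superrigid_square
    {G X : Type*} [Group G] [Countable G] [MeasurableSpace X]
    (ν : Measure X) [IsProbabilityMeasure ν]
    (a : G → X → X) (hpmp : IsPmpAction a ν)
    (hwm : IsWeaklyMixing (diag a) (ν.prod ν))
    (hsr : IsCocycleSuperrigid (diag a) (ν.prod ν))
    (c : G → G → Circle) (hc : IsGrpCocycle2 c)
    (b : G → X → Circle) (hb : ∀ g : G, Measurable (b g))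
    (h : ∀ g h : G, ∀ᵐ x ∂ν, c g h = b g x * b h (a g⁻¹ x) * (b (g * h) x)⁻¹) :
    ∃ m : G → Circle, ∀ g h : G, c g h = (m g)⁻¹ * (m h)⁻¹ * m (g * h) := by
  let d : G → X × X → Circle := fun g p => b g p.1 * (b g p.2)⁻¹
  have mp1 : MeasurePreserving (Prod.fst : X × X → X) (ν.prod ν) ν := measurePreserving_fst
  have mp2 : MeasurePreserving (Prod.snd : X × X → X) (ν.prod ν) ν := measurePreserving_snd
  have hd : IsCocycle1 (diag a) (ν.prod ν) d := by
    refine ⟨fun g => ((hb g).comp measurable_fst).mul ((hb g).comp measurable_snd).inv, ?_⟩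
    intro g k
    filter_upwards [mp1.quasiMeasurePreserving.ae (h g k),
      mp2.quasiMeasurePreserving.ae (h g k)] with p e1 e2
    have e := e1.symm.trans e2
    simp only [d, diag]
    have e3 : b (g * k) p.1 = (c g k)⁻¹ * (b g p.1 * b k (a g⁻¹ p.1)) := by
      rw [e1]; simp [mul_assoc]
    have e4 : b (g * k) p.2 = (c g k)⁻¹ * (b g p.2 * b k (a g⁻¹ p.2)) := by
      rw [e2]; simp [mul_assoc]
    rw [e3, e4]
    simp only [mul_inv, inv_inv]
    have : (c g k)⁻¹ * (b g p.1 * b k (a g⁻¹ p.1)) *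
        (c g k * ((b g p.2)⁻¹ * (b k (a g⁻¹ p.2))⁻¹)) =
        ((c g k)⁻¹ * c g k) * (b g p.1 * (b g p.2)⁻¹ *
          (b k (a g⁻¹ p.1) * (b k (a g⁻¹ p.2))⁻¹)) := by ac_rfl
    rw [this]; simp
  obtain ⟨lam, B, hB, hlam⟩ := hsr d hd
  have mpa2 : ∀ g, MeasurePreserving (diag a g) (ν.prod ν) (ν.prod ν) := fun g =>
    (hpmp.measurePreserving g).prod (hpmp.measurePreserving g)
  have mpa4 : ∀ g, MeasurePreserving (diag (diag a) g) ((ν.prod ν).prod (ν.prod ν))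
      ((ν.prod ν).prod (ν.prod ν)) := fun g => (mpa2 g).prod (mpa2 g)
  let F : (X × X) × (X × X) → Circle := fun p =>
    B p.1 * B p.2 * (B (p.1.1, p.2.2) * B (p.2.1, p.1.2))⁻¹
  have mq1 : MeasurePreserving (Prod.fst : (X × X) × (X × X) → X × X)
    ((ν.prod ν).prod (ν.prod ν)) (ν.prod ν) := measurePreserving_fst
  have mq2 : MeasurePreserving (Prod.snd : (X × X) × (X × X) → X × X)
    ((ν.prod ν).prod (ν.prod ν)) (ν.prod ν) := measurePreserving_snd
  have mq3 : MeasurePreserving (fun p : (X × X) × (X × X) => (p.1.1, p.2.2))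
    ((ν.prod ν).prod (ν.prod ν)) (ν.prod ν) := mp1.prod mp2
  have mq4 : MeasurePreserving (fun p : (X × X) × (X × X) => (p.2.1, p.1.2))
    ((ν.prod ν).prod (ν.prod ν)) (ν.prod ν) := mq3.comp Measure.measurePreserving_swap
  have hFm : Measurable F :=
    ((hB.comp mq1.measurable).mul (hB.comp mq2.measurable)).mul
      ((hB.comp mq3.measurable).mul (hB.comp mq4.measurable)).inv
  have hFinv : ∀ g, ∀ᵐ p ∂((ν.prod ν).prod (ν.prod ν)), F (diag (diag a) g p) = F p := by
    intro g
    have hl := hlam g⁻¹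
    filter_upwards [mq1.quasiMeasurePreserving.ae hl, mq2.quasiMeasurePreserving.ae hl,
      mq3.quasiMeasurePreserving.ae hl, mq4.quasiMeasurePreserving.ae hl] with p e1 e2 e3 e4
    have tr : ∀ q : X × X, d g⁻¹ q = lam g⁻¹ * (B (diag a g⁻¹⁻¹ q) * (B q)⁻¹) →
        B (diag a g q) = (lam g⁻¹)⁻¹ * d g⁻¹ q * B q := by
      intro q hq
      rw [hq]; simp [mul_assoc]
    have f1 := tr _ e1
    have f2 := tr _ e2
    have f3 := tr _ e3
    have f4 := tr _ e4
    simp only [diag, d] at f1 f2 f3 f4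
    simp only [F, diag]
    rw [f1, f2, f3, f4]
    generalize (lam g⁻¹)⁻¹ = l
    generalize b g⁻¹ p.1.1 = x
    generalize b g⁻¹ p.1.2 = y
    generalize b g⁻¹ p.2.1 = z
    generalize b g⁻¹ p.2.2 = w
    have : l * (x * y⁻¹) * B p.1 * (l * (z * w⁻¹) * B p.2) =
      (l * l * x * y⁻¹ * z * w⁻¹) * (B p.1 * B p.2) := by ac_rfl
    rw [this]
    have : l * (x * w⁻¹) * B (p.1.1, p.2.2) * (l * (z * y⁻¹) * B (p.2.1, p.1.2)) =
      (l * l * x * y⁻¹ * z * w⁻¹) * (B (p.1.1, p.2.2) * B (p.2.1, p.1.2)) := by ac_rfl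
    rw [this]
    exact mul_mul_inv_cancel_aux _ _ _
  obtain ⟨k, hk⟩ := ae_const_of_ergodic _ (diag (diag a))
    (fun x => by simp [diag, hpmp.act_one]) (fun g h x => by simp [diag, hpmp.act_mul])
    mpa4 hwm F hFm hFinv
  obtain ⟨⟨x0, y0⟩, hk0⟩ := (Measure.ae_ae_of_ae_prod hk).exists
  let γ : X → Circle := fun w => B (x0, w)
  let β : X → Circle := fun z => k * (B (x0, y0))⁻¹ * B (z, y0)
  have hB' : ∀ᵐ q ∂(ν.prod ν), B q = β q.1 * γ q.2 := by
    filter_upwards [hk0] with q hq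
    simp only [F] at hq
    simp only [β, γ]
    rw [← hq]
    simp only [mul_inv]
    generalize B (x0, y0) = u
    generalize B (x0, q.2) = v
    generalize B (q.1, y0) = w
    have : u * B q * (v⁻¹ * w⁻¹) * u⁻¹ * w * v = (u * u⁻¹) * (v⁻¹ * v) * (w⁻¹ * w) * B q := by
      ac_rfl
    rw [this]; simp
  have hn : ∀ g, ∃ n : Circle, ∀ᵐ y ∂ν, b g y = n * γ y * (γ (a g⁻¹ y))⁻¹ := by
    intro g
    have h2 : ∀ᵐ q ∂(ν.prod ν), b g q.1 * (b g q.2)⁻¹ = lam g *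
        ((β (a g⁻¹ q.1) * γ (a g⁻¹ q.2)) * (β q.1 * γ q.2)⁻¹) := by
      filter_upwards [hlam g, hB', (mpa2 g⁻¹).quasiMeasurePreserving.ae hB'] with q e1 e2 e3
      rw [e2, e3] at e1
      exact e1
    obtain ⟨x, hx⟩ := (Measure.ae_ae_of_ae_prod h2).exists
    refine ⟨(lam g)⁻¹ * b g x * (β (a g⁻¹ x))⁻¹ * β x, ?_⟩
    filter_upwards [hx] with y hy
    have e : b g y = b g x * (b g x * (b g y)⁻¹)⁻¹ := by simp
    rw [e, hy]
    simp only [mul_inv, inv_inv]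
    ac_rfl
  choose n hn using hn
  refine ⟨fun g => (n g)⁻¹, fun g k => ?_⟩
  have hg := (hpmp.measurePreserving g⁻¹).quasiMeasurePreserving.ae (hn k)
  obtain ⟨x, e1, e2, e3, e4⟩ := ((h g k).and ((hn g).and (hg.and (hn (g * k))))).exists
  have e5 : a (g * k)⁻¹ x = a k⁻¹ (a g⁻¹ x) := by rw [mul_inv_rev, hpmp.act_mul]
  rw [e1, e2, e3, e4, e5]
  simp only [mul_inv, inv_inv]
  generalize γ x = u
  generalize γ (a g⁻¹ x) = v
  generalize γ (a k⁻¹ (a g⁻¹ x)) = w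
  have : n g * u * v⁻¹ * (n k * v * w⁻¹) * ((n (g * k))⁻¹ * u⁻¹ * w) =
    (u * u⁻¹) * (v⁻¹ * v) * (w⁻¹ * w) * (n g * n k * (n (g * k))⁻¹) := by ac_rfl
  rw [this]; simp

end AlgActCohomology
end
end

section
/- Let G be a countable discrete group with a p.m.p. action σ on a probability space (X, ν) such that the diagonal action on (X², ν²) is weakly mixing. Suppose a measurable map b : G × X → 𝕋, a group homomorphism λ : G → 𝕋, and a measurable map t : X² → 𝕋 satisfy, for every g ∈ G, b(g, x) = b(g, y)·λ(g)·t(x, y)·t(g⁻¹x, g⁻¹y)⁻¹ for ν²-a.e. (x, y) ∈ X². Then t splits as a simple tensor: there exist measurable maps φ, ψ : X → 𝕋 such that t(x, y) = φ(x)·ψ(y) for ν²-a.e. (x, y) ∈ X². -/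
open MeasureTheory

noncomputable section

namespace AlgActCohomology

variable {G X : Type*}

lemma add_alg1 {M : Type*} [AddCommGroup M] {u v l s r : M} (h : u = v + l + s + -r) :
    r = -u + v + l + s := by subst h; abel

lemma add_alg2 {M : Type*} [AddCommGroup M] (x y z w l s1 s2 s3 s4 : M) :
    (-x + y + l + s1) + -(-z + y + l + s3) + (-z + w + l + s2) + -(-x + w + l + s4)
      = s1 + -s3 + s2 + -s4 := by abel

lemma add_alg3 {M : Type*} [AddCommGroup M] (s1 s2 s3 s4 : M) :
    s2 = (s1 + -s3 + s2 + -s4) + -s1 + s3 + s4 := by abel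

lemma mul_alg1 {M : Type*} [CommGroup M] {u v l s r : M} (h : u = v * l * s * r⁻¹) :
    r = u⁻¹ * v * l * s := add_alg1 (M := Additive M) h

lemma mul_alg2 {M : Type*} [CommGroup M] (x y z w l s1 s2 s3 s4 : M) :
    (x⁻¹ * y * l * s1) * (z⁻¹ * y * l * s3)⁻¹ * (z⁻¹ * w * l * s2) * (x⁻¹ * w * l * s4)⁻¹
      = s1 * s3⁻¹ * s2 * s4⁻¹ := add_alg2 (M := Additive M) x y z w l s1 s2 s3 s4

lemma mul_alg3 {M : Type*} [CommGroup M] (s1 s2 s3 s4 : M) :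
    s2 = (s1 * s3⁻¹ * s2 * s4⁻¹) * s1⁻¹ * s3 * s4 := add_alg3 (M := Additive M) s1 s2 s3 s4

/-- A function invariant a.e. under an ergodic action of a countable group is a.e. constant. -/
lemma ae_const_of_invariant {G Y : Type*} [Group G] [Countable G] [MeasurableSpace Y]
    (μ : Measure Y) [IsProbabilityMeasure μ] (a : G → Y → Y)
    (hmul : ∀ g h x, a (g * h) x = a g (a h x))
    (hmeas : ∀ g, Measurable (a g))
    (herg : IsErgodicAction a μ) (F : Y → Circle) (hF : Measurable F)
    (hinv : ∀ g, ∀ᵐ y ∂μ, F (a g y) = F y) : ∃ c : Circle, ∀ᵐ y ∂μ, F y = c := by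
  have key : ∀ U : Set Circle, MeasurableSet U →
      (∀ᵐ y ∂μ, F y ∈ U) ∨ (∀ᵐ y ∂μ, F y ∉ U) := by
    intro U hU
    have hsm : MeasurableSet {y | ∀ g, F (a g y) ∈ U} := by
      rw [Set.ofPred_forall]
      exact MeasurableSet.iInter fun g => (hF.comp (hmeas g)) hU
    have hall : ∀ᵐ y ∂μ, ∀ g, F (a g y) = F y := ae_all_iff.2 hinv
    rcases herg {y | ∀ g, F (a g y) ∈ U} hsm (by
      intro g
      ext y
      simp only [Set.mem_preimage, Set.mem_ofPred_eq, ← hmul]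
      exact ⟨fun H k => by simpa using H (k * g⁻¹), fun H k => H (k * g)⟩) with h0 | h1
    · right
      have h0' : ∀ᵐ y ∂μ, ¬ (∀ g, F (a g y) ∈ U) := by
        rw [ae_iff]; simpa using h0
      filter_upwards [hall, h0'] with y e n hy
      exact n fun g => by rw [e g]; exact hy
    · left
      have h1' : ∀ᵐ y ∂μ, ∀ g, F (a g y) ∈ U := (prob_compl_eq_zero_iff hsm).2 h1
      filter_upwards [hall, h1'] with y e n
      rw [← e 1]; exact n 1
  exact Filter.exists_eventuallyEq_const_of_forall_separating MeasurableSet key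

/-- (Splitting of the transfer map, after Furman.)  Suppose the
diagonal action of `G` on `(X², ν²)` is weakly mixing, and suppose a measurable
`b : G × X → 𝕋`, a homomorphism `lam : G → 𝕋` and a measurable `t : X² → 𝕋` satisfy
`b g x = b g y * lam g * t (x, y) * t (g⁻¹x, g⁻¹y)⁻¹` for a.e. `(x, y)`.  Then `t`
splits as a simple tensor `t (x, y) = φ x * ψ y` a.e. -/
theorem t_splits_as_simple_tensor
    {G X : Type*} [Group G] [Countable G] [MeasurableSpace X]
    (ν : Measure X) [IsProbabilityMeasure ν]
    (a : G → X → X) (hpmp : IsPmpAction a ν)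
    (hwm : IsWeaklyMixing (diag a) (ν.prod ν))
    (b : G → X → Circle) (hb : ∀ g : G, Measurable (b g))
    (lam : G →* Circle) (t : X × X → Circle) (ht : Measurable t)
    (h : ∀ g : G, ∀ᵐ p : X × X ∂ν.prod ν,
      b g p.1 = b g p.2 * lam g * t p * (t (a g⁻¹ p.1, a g⁻¹ p.2))⁻¹) :
    ∃ φ ψ : X → Circle, Measurable φ ∧ Measurable ψ ∧
      ∀ᵐ p : X × X ∂ν.prod ν, t p = φ p.1 * ψ p.2 := by
  let F : (X × X) × (X × X) → Circle := fun q =>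
    t q.1 * (t (q.2.1, q.1.2))⁻¹ * t q.2 * (t (q.1.1, q.2.2))⁻¹
  have hF : Measurable F := by
    have m1 : Measurable fun q : (X × X) × (X × X) => t q.1 := ht.comp measurable_fst
    have m2 : Measurable fun q : (X × X) × (X × X) => t q.2 := ht.comp measurable_snd
    have m3 : Measurable fun q : (X × X) × (X × X) => t (q.2.1, q.1.2) :=
      ht.comp (by fun_prop)
    have m4 : Measurable fun q : (X × X) × (X × X) => t (q.1.1, q.2.2) :=
      ht.comp (by fun_prop)
    exact ((m1.mul m3.inv).mul m2).mul m4.inv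
  have q1 : MeasurePreserving (fun q : (X × X) × (X × X) => q.1)
      ((ν.prod ν).prod (ν.prod ν)) (ν.prod ν) := measurePreserving_fst
  have q2 : MeasurePreserving (fun q : (X × X) × (X × X) => q.2)
      ((ν.prod ν).prod (ν.prod ν)) (ν.prod ν) := measurePreserving_snd
  have q4 : MeasurePreserving (fun q : (X × X) × (X × X) => (q.1.1, q.2.2))
      ((ν.prod ν).prod (ν.prod ν)) (ν.prod ν) :=
    (measurePreserving_fst (μ := ν) (ν := ν)).prod (measurePreserving_snd (μ := ν) (ν := ν))
  have q3 : MeasurePreserving (fun q : (X × X) × (X × X) => (q.2.1, q.1.2))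
      ((ν.prod ν).prod (ν.prod ν)) (ν.prod ν) :=
    q4.comp Measure.measurePreserving_swap
  obtain ⟨c, hc⟩ := ae_const_of_invariant ((ν.prod ν).prod (ν.prod ν)) (diag (diag a))
    (fun g k x => by simp [diag, hpmp.act_mul])
    (fun g => by
      have := (hpmp.measurePreserving g).measurable
      unfold diag
      fun_prop) hwm F hF (fun g => by
      have hg := h g⁻¹
      filter_upwards [q1.quasiMeasurePreserving.ae hg, q2.quasiMeasurePreserving.ae hg,
        q3.quasiMeasurePreserving.ae hg, q4.quasiMeasurePreserving.ae hg] with q e1 e2 e3 e4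
      simp only [inv_inv] at e1 e2 e3 e4
      simp only [F, diag]
      rw [mul_alg1 e1, mul_alg1 e2, mul_alg1 e3, mul_alg1 e4]
      exact mul_alg2 _ _ _ _ _ _ _ _ _)
  obtain ⟨p, hp⟩ := (Measure.ae_ae_of_ae_prod hc).exists
  refine ⟨fun x => c * (t p)⁻¹ * t (x, p.2), fun y => t (p.1, y), ?_, ?_, ?_⟩
  · exact (ht.comp (by fun_prop : Measurable fun x : X => (x, p.2))).const_mul _
  · exact ht.comp (by fun_prop)
  · filter_upwards [hp] with r hr
    rw [← hr]
    exact mul_alg3 _ _ _ _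

end AlgActCohomology
end
end

section
/- Let G be a countable infinite discrete group such that for every standard probability space (X₀, μ₀) the Bernoulli shift G ↷ (X₀^G, μ₀^G) is 𝕋-cocycle superrigid (i.e., G belongs to the class 𝒢; for example, this holds when G has property (T)). Then the second group cohomology H²(G, ℤG), where ℤG is the integral group ring with G acting by left multiplication, is torsion free as an abelian group. -/
open MeasureTheory

noncomputable section

namespace AlgActCohomology

variable {G X : Type*}

section Bernoulli

/-- The Bernoulli shift action `G ↷ X₀^G`, `(g • x) h = x (g⁻¹ h)`. -/
def bernoulliShift (G X₀ : Type*) [Group G] : G → (G → X₀) → (G → X₀) :=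
  fun g x h => x (g⁻¹ * h)

/-- `μ` is the product along `ι` of copies of `μ₀`: it gives every finite-dimensional
cylinder set its product measure.  (This characterizes the Bernoulli product measure
`μ₀^ι` uniquely.) -/
def IsBernoulliMeasure {ι X₀ : Type*} [MeasurableSpace X₀] (μ₀ : Measure X₀)
    (μ : Measure (ι → X₀)) : Prop :=
  ∀ (s : Finset ι) (t : ι → Set X₀), (∀ i, MeasurableSet (t i)) →
    μ {x | ∀ i ∈ s, x i ∈ t i} = ∏ i ∈ s, μ₀ (t i)

/-- The class `𝒢` of countable groups `G` such that for every standard probability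
space `(X₀, μ₀)` the Bernoulli shift `G ↷ (X₀^G, μ₀^G)` is `𝕋`-cocycle superrigid. -/
def InClassG (G : Type*) [Group G] : Prop :=
  ∀ (X₀ : Type) [MeasurableSpace X₀] [StandardBorelSpace X₀]
    (μ₀ : Measure X₀) [IsProbabilityMeasure μ₀]
    (μ : Measure (G → X₀)) [IsProbabilityMeasure μ],
    IsBernoulliMeasure μ₀ μ → IsCocycleSuperrigid (bernoulliShift G X₀) μ

end Bernoulli


section Fourier

variable {G : Type} {n : ℕ} [NeZero n]

/-- The character of `(ℤ/n)^G` attached to an element of `(ℤ/n)G`. -/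
def chi (f : G →₀ ZMod n) (x : G → ZMod n) : Circle :=
  ZMod.toCircle (Finsupp.linearCombination (ZMod n) x f)

lemma chi_add (f f' : G →₀ ZMod n) (x : G → ZMod n) :
    chi (f + f') x = chi f x * chi f' x := by
  simp [chi, AddChar.map_add_eq_mul]

lemma chi_zero (x : G → ZMod n) : chi (0 : G →₀ ZMod n) x = 1 := by
  simp [chi]

lemma chi_neg (f : G →₀ ZMod n) (x : G → ZMod n) : chi (-f) x = (chi f x)⁻¹ := by
  simp [chi, AddChar.map_neg_eq_inv]

lemma chi_neg_coe (f : G →₀ ZMod n) (x : G → ZMod n) :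
    (chi (-f) x : ℂ) = starRingEnd ℂ (chi f x : ℂ) := by
  rw [chi_neg, Circle.coe_inv_eq_conj]

lemma chi_add_right (f : G →₀ ZMod n) (x y : G → ZMod n) :
    chi f (x + y) = chi f x * chi f y := by
  rw [chi, chi, chi, ← AddChar.map_add_eq_mul]
  congr 1
  simp [Finsupp.linearCombination_apply, Finsupp.sum, mul_add, Finset.sum_add_distrib]

open Classical in
lemma chi_pi_single (f : G →₀ ZMod n) (g : G) :
    chi f (Pi.single g 1) = ZMod.toCircle (f g) := by
  rw [chi]
  congr 1
  simp [Finsupp.linearCombination_apply, Finsupp.sum, Pi.single_apply]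
  tauto

lemma continuous_chi (f : G →₀ ZMod n) : Continuous (chi f) := by
  have h1 : Continuous (fun x : G → ZMod n => Finsupp.linearCombination (ZMod n) x f) := by
    simp only [Finsupp.linearCombination_apply, Finsupp.sum, smul_eq_mul]
    fun_prop
  exact continuous_of_discreteTopology.comp h1

/-- The character as a complex-valued continuous map. -/
def chiC (f : G →₀ ZMod n) : C(G → ZMod n, ℂ) where
  toFun x := chi f x
  continuous_toFun := continuous_induced_dom.comp (continuous_chi f)

lemma chiC_apply (f : G →₀ ZMod n) (x : G → ZMod n) : chiC f x = (chi f x : ℂ) := rfl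

/-- The star subalgebra generated by characters. -/
def chiAlg (G : Type) (n : ℕ) [NeZero n] : StarSubalgebra ℂ C(G → ZMod n, ℂ) where
  toSubalgebra := Algebra.adjoin ℂ (Set.range chiC)
  star_mem' := by
    change Algebra.adjoin ℂ (Set.range (chiC (G := G) (n := n))) ≤
      star (Algebra.adjoin ℂ (Set.range (chiC (G := G) (n := n))))
    refine Algebra.adjoin_le ?_
    rintro - ⟨f, rfl⟩
    exact Algebra.subset_adjoin ⟨-f, ContinuousMap.ext fun x => chi_neg_coe f x⟩

lemma chiAlg_coe : Subalgebra.toSubmodule (chiAlg G n).toSubalgebra =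
    Submodule.span ℂ (Set.range (chiC (G := G) (n := n))) := by
  apply Algebra.adjoin_eq_span_of_subset
  refine Set.Subset.trans ?_ Submodule.subset_span
  intro x hx
  refine Submonoid.closure_induction (fun _ => id) ⟨0, ?_⟩ ?_ hx
  · ext1 z; simp [chiC_apply, chi_zero]
  · rintro - - - - ⟨m, rfl⟩ ⟨n, rfl⟩
    refine ⟨m + n, ?_⟩
    ext1 z
    simp [chiC_apply, chi_add]

lemma chiAlg_sep : (chiAlg G n).SeparatesPoints := by
  intro x y hxy
  obtain ⟨g, hg⟩ := Function.ne_iff.mp hxy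
  refine ⟨_, ⟨chiC (Finsupp.single g 1), Algebra.subset_adjoin ⟨_, rfl⟩, rfl⟩, ?_⟩
  simp only [chiC_apply]
  intro h
  replace h := Circle.ext h
  simp only [chi, Finsupp.linearCombination_single, one_smul] at h
  exact hg (ZMod.injective_toCircle h)

lemma span_chiC : (Submodule.span ℂ (Set.range (chiC (G := G) (n := n)))).topologicalClosure
    = ⊤ := by
  rw [← chiAlg_coe]
  exact congr_arg (Subalgebra.toSubmodule <| StarSubalgebra.toSubalgebra ·)
    (ContinuousMap.starSubalgebra_topologicalClosure_eq_top_of_separatesPoints (chiAlg G n)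
      chiAlg_sep)

/-- Normalised Haar measure on `ℤ/n`. -/
def mu0 (n : ℕ) [NeZero n] : Measure (ZMod n) := Measure.addHaarMeasure ⊤

instance : IsProbabilityMeasure (mu0 n) := ⟨by
  have := Measure.addHaarMeasure_self (G := ZMod n) (K₀ := ⊤)
  simpa [mu0] using this⟩

/-- The Bernoulli measure. -/
def muB (G : Type) (n : ℕ) [NeZero n] : Measure (G → ZMod n) :=
  Measure.infinitePi fun _ => mu0 n

instance : IsProbabilityMeasure (muB G n) := by unfold muB; infer_instance

lemma muB_bernoulli : IsBernoulliMeasure (mu0 n) (muB G n) := by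
  intro s t ht
  have := Measure.infinitePi_pi (fun _ : G => mu0 n) (s := s) (t := t) (fun i _ => ht i)
  rw [← this]
  rfl

lemma muB_add (y : G → ZMod n) : MeasurePreserving (fun x => x + y) (muB G n) (muB G n) := by
  refine ⟨by fun_prop, ?_⟩
  have := Measure.infinitePi_map_pi (μ := fun _ : G => mu0 n) (f := fun i a => a + y i)
    (fun i => by fun_prop)
  have h2 : (fun i : G => (mu0 n).map (fun a => a + y i)) = fun _ => mu0 n := by
    funext i
    unfold mu0
    exact map_add_right_eq_self _ _
  simp only [h2] at this
  exact this

lemma muB_shift [Group G] (g : G) :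
    MeasurePreserving (bernoulliShift G (ZMod n) g) (muB G n) (muB G n) := by
  have := Measure.infinitePi_map_piCongrLeft (fun _ : G => mu0 n) (Equiv.mulLeft g)
  have hm : Measurable (bernoulliShift G (ZMod n) g) := by
    unfold bernoulliShift; fun_prop
  refine ⟨hm, ?_⟩
  change Measure.map _ (Measure.infinitePi _) = Measure.infinitePi _
  convert this using 2
  ext x h
  obtain ⟨k, rfl⟩ := (Equiv.mulLeft g).surjective h
  rw [MeasurableEquiv.coe_piCongrLeft, Equiv.piCongrLeft_apply_apply]
  simp [bernoulliShift]

lemma integral_chi (f : G →₀ ZMod n) (hf : f ≠ 0) : ∫ x, (chi f x : ℂ) ∂(muB G n) = 0 := by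
  classical
  obtain ⟨g, hg⟩ := Finsupp.ne_iff.mp hf
  have h1 : ∫ x, (chi f (x + Pi.single g 1) : ℂ) ∂(muB G n) = ∫ x, (chi f x : ℂ) ∂(muB G n) := by
    have e : MeasurableEmbedding (fun x : G → ZMod n => x + Pi.single g 1) :=
      (MeasurableEquiv.addRight (Pi.single g 1 : G → ZMod n)).measurableEmbedding
    exact (muB_add (Pi.single g 1)).integral_comp e (fun x => (chi f x : ℂ))
  simp only [chi_add_right, chi_pi_single, Circle.coe_mul, integral_mul_const] at h1
  by_contra h
  have h2 : (ZMod.toCircle (f g) : ℂ) = 1 := mul_left_cancel₀ h (by rw [h1, mul_one])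
  have h3 : ZMod.toCircle (f g) = ZMod.toCircle (0 : ZMod n) := by
    rw [AddChar.map_zero_eq_one]
    exact Circle.ext (by simpa using h2)
  exact hg (ZMod.injective_toCircle h3)

variable [Countable G]

/-- Characters in `L²`. -/
abbrev chiLp (f : G →₀ ZMod n) : Lp ℂ 2 (muB G n) :=
  ContinuousMap.toLp (E := ℂ) 2 (muB G n) ℂ (chiC f)

lemma span_chiLp : (Submodule.span ℂ (Set.range (chiLp (G := G) (n := n)))).topologicalClosure
    = ⊤ := by
  convert!
    (ContinuousMap.toLp_denseRange ℂ (muB G n) ℂ (p := 2) (by simp)).topologicalClosure_map_submodule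
      span_chiC
  rw [Submodule.map_span]
  unfold chiLp
  rw [Set.range_comp']
  simp only [ContinuousLinearMap.coe_coe]

lemma orthonormal_chi : Orthonormal ℂ (chiLp (G := G) (n := n)) := by
  classical
  rw [orthonormal_iff_ite]
  intro i j
  rw [ContinuousMap.inner_toLp (muB G n) (chiC i) (chiC j)]
  simp_rw [chiC_apply, ← chi_neg_coe, ← Circle.coe_mul, ← chi_add]
  split_ifs with h
  · simp [h, chi_zero]
  · exact integral_chi _ (by simpa [← sub_eq_add_neg, sub_eq_zero] using Ne.symm h)

end Fourier

section Coeff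

variable {G : Type} {n : ℕ} [NeZero n]

lemma measurable_circle_coe : Measurable (fun z : Circle => (z : ℂ)) := by
  have h : Continuous (fun z : Circle => (z : ℂ)) := continuous_induced_dom
  exact h.measurable

/-- Fourier coefficients of a circle-valued function. -/
def bhat (b : (G → ZMod n) → Circle) (f : G →₀ ZMod n) : ℂ :=
  ∫ x, (b x * chi (-f) x : ℂ) ∂(muB G n)

lemma memLp_b (b : (G → ZMod n) → Circle) (hb : Measurable b) :
    MemLp (fun x => (b x : ℂ)) 2 (muB G n) := by
  have h1 : Measurable (fun x => (b x : ℂ)) :=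
    measurable_circle_coe.comp hb
  exact MemLp.of_bound h1.aestronglyMeasurable 1 (ae_of_all _ fun x => (Circle.norm_coe _).le)

variable [Countable G]

lemma inner_chi (b : (G → ZMod n) → Circle) (hb : Measurable b) (f : G →₀ ZMod n) :
    inner ℂ (chiLp f) ((memLp_b b hb).toLp _) = bhat b f := by
  rw [L2.inner_def, bhat]
  apply integral_congr_ae
  filter_upwards [ContinuousMap.coeFn_toLp (p := 2) (𝕜 := ℂ) (muB G n) (chiC f),
    (memLp_b b hb).coeFn_toLp] with x h1 h2
  rw [h1, h2, chi_neg_coe]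
  simp [chiC_apply]

lemma summable_bhat (b : (G → ZMod n) → Circle) (hb : Measurable b) :
    Summable fun f : G →₀ ZMod n => ‖bhat b f‖ ^ 2 := by
  simp_rw [← inner_chi b hb]
  exact Orthonormal.inner_products_summable _ (orthonormal_chi (G := G) (n := n))

lemma exists_bhat_ne (b : (G → ZMod n) → Circle) (hb : Measurable b) :
    ∃ f : G →₀ ZMod n, bhat b f ≠ 0 := by
  by_contra! h
  simp_rw [← inner_chi b hb] at h
  have h0 : (memLp_b b hb).toLp _ = 0 := by
    have hle : Submodule.span ℂ (Set.range (chiLp (G := G) (n := n))) ≤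
        (ℂ ∙ ((memLp_b b hb).toLp _))ᗮ := by
      rw [Submodule.span_le]
      rintro _ ⟨f, rfl⟩
      rw [SetLike.mem_coe, Submodule.mem_orthogonal_singleton_iff_inner_left]
      exact h f
    have h1 := Submodule.topologicalClosure_minimal (s := Submodule.span ℂ
      (Set.range (chiLp (G := G) (n := n)))) hle (Submodule.isClosed_orthogonal _)
    have h4 := span_chiLp (G := G) (n := n)
    rw [h4] at h1
    have h2 : (memLp_b b hb).toLp _ ∈ (ℂ ∙ ((memLp_b b hb).toLp _))ᗮ := h1 Submodule.mem_top
    rw [Submodule.mem_orthogonal_singleton_iff_inner_left] at h2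
    exact inner_self_eq_zero.mp h2
  have h1 := (memLp_b b hb).coeFn_toLp
  rw [h0] at h1
  have h2 := Lp.coeFn_zero ℂ (p := 2) (μ := muB G n)
  have h3 : ∀ᵐ x ∂(muB G n), False := by
    filter_upwards [h1, h2] with x e1 e2
    rw [e1] at e2
    exact Circle.coe_ne_zero (b x) e2
  simp [IsProbabilityMeasure.ne_zero] at h3

end Coeff

section Main

variable {G : Type} [Group G] {n : ℕ}

/-- Left translation on `(ℤ/n)G`. -/
def sh (g : G) (f : G →₀ ZMod n) : G →₀ ZMod n := Finsupp.equivMapDomain (Equiv.mulLeft g) f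

lemma sh_apply (g : G) (f : G →₀ ZMod n) (k : G) : sh g f k = f (g⁻¹ * k) := rfl

lemma sh_sub (g : G) (f f' : G →₀ ZMod n) : sh g (f - f') = sh g f - sh g f' := by
  ext k; simp [sh_apply]

lemma sh_mul (g h : G) (f : G →₀ ZMod n) : sh (g * h) f = sh g (sh h f) := by
  ext k; simp [sh_apply, mul_assoc]

lemma sh_one (f : G →₀ ZMod n) : sh 1 f = f := by
  ext k; simp [sh_apply]

lemma sh_neg (g : G) (f : G →₀ ZMod n) : sh g (-f) = -sh g f := by
  ext k; simp [sh_apply]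

/-- A nonzero element of `(ℤ/n)G` has infinite orbit when `G` is infinite. -/
lemma eq_zero_of_finite_orbit [Infinite G] (d : G →₀ ZMod n) (S : Set (G →₀ ZMod n))
    (hS : S.Finite) (h : ∀ g, sh g d ∈ S) : d = 0 := by
  classical
  by_contra hd
  obtain ⟨k, hk⟩ := Finsupp.ne_iff.mp hd
  have hfin : (⋃ f ∈ S, (f.support : Set G)).Finite :=
    hS.biUnion fun f _ => f.support.finite_toSet
  have : Set.univ ⊆ (fun g : G => g * k) ⁻¹' (⋃ f ∈ S, (f.support : Set G)) := by
    intro g _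
    simp only [Set.mem_preimage, Set.mem_iUnion]
    refine ⟨sh g d, h g, ?_⟩
    simpa [sh_apply] using hk
  exact Set.infinite_univ ((hfin.preimage (mul_left_injective k).injOn).subset this)

variable [NeZero n]

lemma chi_sh (g : G) (f : G →₀ ZMod n) (x : G → ZMod n) :
    chi (sh g f) x = chi f (bernoulliShift G (ZMod n) g⁻¹ x) := by
  rw [chi, chi, sh, Finsupp.linearCombination_equivMapDomain]
  congr 2
  ext k
  simp [bernoulliShift]

lemma bhat_rel (c : G → G →₀ ZMod n) (lam : G →* Circle)
    (b : (G → ZMod n) → Circle) (hb : Measurable b)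
    (h : ∀ g : G, ∀ᵐ x ∂(muB G n), chi (c g) x =
      lam g * (b (bernoulliShift G (ZMod n) g⁻¹ x) * (b x)⁻¹)) (g : G) (f : G →₀ ZMod n) :
    ‖bhat b (sh g f - c g)‖ = ‖bhat b f‖ := by
  have h1 : bhat b (sh g f - c g) = (lam g : ℂ) * bhat b f := by
    have e1 : bhat b (sh g f - c g) = ∫ x, (lam g : ℂ) *
        (fun y => (b y * chi (-f) y : ℂ)) (bernoulliShift G (ZMod n) g⁻¹ x) ∂(muB G n) := by
      apply integral_congr_ae
      filter_upwards [h g] with x hx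
      have : -(sh g f - c g) = c g + sh g (-f) := by rw [sh_neg]; abel
      simp only [this, chi_add, chi_sh, hx, ← Circle.coe_mul]
      congr 1
      have : b x * (b x)⁻¹ = 1 := mul_inv_cancel _
      calc _ = (b x * (b x)⁻¹) * (lam g * (b (bernoulliShift G (ZMod n) g⁻¹ x) *
              chi (-f) (bernoulliShift G (ZMod n) g⁻¹ x))) := by ac_rfl
        _ = _ := by rw [this, one_mul]
    rw [e1, integral_const_mul, bhat]
    congr 1
    have hm : Measurable fun y => (b y * chi (-f) y : ℂ) := by
      have hc : Measurable (fun z : Circle => (z : ℂ)) :=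
        measurable_circle_coe
      have h2 : Measurable (chi (-f)) := by
        unfold chi
        refine (measurable_of_countable ZMod.toCircle).comp ?_
        simp only [Finsupp.linearCombination_apply, Finsupp.sum, smul_eq_mul]
        fun_prop
      exact (hc.comp hb).mul (hc.comp h2)
    rw [← integral_map (muB_shift g⁻¹).measurable.aemeasurable hm.aestronglyMeasurable,
      (muB_shift g⁻¹).map_eq]
  rw [h1, norm_mul, Circle.norm_coe, one_mul]

/-- `H¹(G, (ℤ/n)G) = 0` for infinite groups in the class `𝒢`. -/
theorem h1_vanish [Countable G] [Infinite G] (hG : InClassG G) (c : G → G →₀ ZMod n)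
    (hc : ∀ g h, c (g * h) = c g + sh g (c h)) : ∃ f, ∀ g, c g = sh g f - f := by
  obtain ⟨lam, b, hb, h⟩ := hG (ZMod n) (mu0 n) (muB G n) muB_bernoulli
    (fun g x => chi (c g) x) ⟨fun g => (continuous_chi (c g)).measurable, fun g h =>
      ae_of_all _ fun x => by
        change chi (c (g * h)) x = chi (c g) x * chi (c h) _
        rw [hc, chi_add, chi_sh]⟩
  have hrel := bhat_rel c lam b hb h
  obtain ⟨f₀, hf₀⟩ := exists_bhat_ne b hb
  set S : Set (G →₀ ZMod n) := {f | ‖bhat b f‖ = ‖bhat b f₀‖} with hSdef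
  have hS : S.Finite := by
    have h1 := (summable_bhat b hb).tendsto_cofinite_zero
    have h2 := h1.eventually (gt_mem_nhds (a := ‖bhat b f₀‖ ^ 2) (b := 0) (pow_pos (norm_pos_iff.mpr hf₀) 2))
    refine (Filter.eventually_cofinite.mp h2).subset ?_
    intro f hf
    have hf' : ‖bhat b f‖ = ‖bhat b f₀‖ := hf
    simp [hf']
  have hSS : ∀ f ∈ S, f = f₀ := by
    intro f hf
    rw [← sub_eq_zero]
    refine eq_zero_of_finite_orbit _ _ (hS.sub hS) fun g => ?_
    refine ⟨sh g f - c g, (hrel g f).trans hf, sh g f₀ - c g, hrel g f₀, ?_⟩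
    simp [sh_sub]
  refine ⟨f₀, fun g => ?_⟩
  have := hSS _ (hrel g f₀)
  rw [← this]
  nth_rewrite 1 [this]
  abel

end Main

section Algebra

open groupCohomology

variable {G : Type} [Group G]

/-- Reduction mod `n` of the coefficients. -/
def redn (n : ℕ) (a : MonoidAlgebra ℤ G) : G →₀ ZMod n :=
  a.coeff.mapRange (fun z : ℤ => (z : ZMod n)) (by simp)

lemma coeff_nsmul_apply (n : ℕ) (a : MonoidAlgebra ℤ G) (k : G) :
    (n • a).coeff k = n * a.coeff k := by
  rw [MonoidAlgebra.coeff_smul, Finsupp.smul_apply, nsmul_eq_mul]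

lemma redn_apply (n : ℕ) (a : MonoidAlgebra ℤ G) (k : G) :
    redn n a k = ((a.coeff k : ℤ) : ZMod n) := rfl

lemma redn_surj (n : ℕ) (f : G →₀ ZMod n) : ∃ a : MonoidAlgebra ℤ G, redn n a = f := by
  obtain ⟨F, hF⟩ := Finsupp.mapRange_surjective (fun z : ℤ => (z : ZMod n)) (by simp)
    ZMod.intCast_surjective f
  exact ⟨MonoidAlgebra.ofCoeff F, hF⟩

lemma redn_eq_zero (n : ℕ) [NeZero n] (a : MonoidAlgebra ℤ G) (h : redn n a = 0) :
    ∃ a' : MonoidAlgebra ℤ G, a = n • a' := by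
  refine ⟨MonoidAlgebra.ofCoeff (a.coeff.mapRange (fun z : ℤ => z / n) (by simp)), ?_⟩
  ext k
  have h1 : redn n a k = 0 := by rw [h]; rfl
  rw [redn_apply, ZMod.intCast_zmod_eq_zero_iff_dvd] at h1
  obtain ⟨z, hz⟩ := h1
  have hn : (n : ℤ) ≠ 0 := by exact_mod_cast NeZero.ne n
  rw [coeff_nsmul_apply]
  simp only [hz, Finsupp.mapRange_apply]
  rw [Int.mul_ediv_cancel_left _ hn]

lemma redn_rho (n : ℕ) (g : G) (a : MonoidAlgebra ℤ G) :
    redn n (Representation.ofMulAction ℤ G G g a) = sh g (redn n a) := by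
  ext k
  rw [sh_apply, redn_apply, redn_apply, Representation.coeff_ofMulAction, smul_eq_mul]

lemma redn_add (n : ℕ) (a a' : MonoidAlgebra ℤ G) :
    redn n (a + a') = redn n a + redn n a' := by
  ext k; simp [redn_apply]

lemma redn_sub (n : ℕ) (a a' : MonoidAlgebra ℤ G) :
    redn n (a - a') = redn n a - redn n a' := by
  ext k; simp [redn_apply]

lemma redn_nsmul (n : ℕ) (a : MonoidAlgebra ℤ G) : redn n (n • a) = 0 := by
  ext k; rw [redn_apply, coeff_nsmul_apply]; simp

lemma nsmul_cancel (n : ℕ) [NeZero n] (a a' : MonoidAlgebra ℤ G) (h : n • a = n • a') :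
    a = a' := by
  ext k
  have h1 := congrArg (fun t : MonoidAlgebra ℤ G => t.coeff k) h
  have hn : (n : ℤ) ≠ 0 := by exact_mod_cast NeZero.ne n
  simp only [coeff_nsmul_apply] at h1
  exact mul_left_cancel₀ hn h1

/-- The explicit form of the torsion statement. -/
lemma explicit [Countable G] [Infinite G] (hG : InClassG G) (n : ℕ) [NeZero n]
    (s : G → G → MonoidAlgebra ℤ G) (β : G → MonoidAlgebra ℤ G)
    (h : ∀ g k, Representation.ofMulAction ℤ G G g (β k) - β (g * k) + β g = n • s g k) :
    ∃ γ : G → MonoidAlgebra ℤ G,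
      ∀ g k, Representation.ofMulAction ℤ G G g (γ k) - γ (g * k) + γ g = s g k := by
  obtain ⟨f, hf⟩ := h1_vanish (n := n) hG (fun g => redn n (β g)) (by
    intro g k
    have h1 := congrArg (redn n) (h g k)
    rw [redn_add, redn_sub, redn_rho, redn_nsmul] at h1
    change redn n (β (g * k)) = redn n (β g) + sh g (redn n (β k))
    rw [← sub_eq_zero, ← neg_eq_zero, ← h1]
    abel)
  obtain ⟨F, rfl⟩ := redn_surj n f
  have hex : ∀ g, ∃ a' : MonoidAlgebra ℤ G,
      β g - (Representation.ofMulAction ℤ G G g F - F) = n • a' := by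
    intro g
    apply redn_eq_zero
    rw [redn_sub, redn_sub, redn_rho, ← hf g, sub_self]
  choose γ hγ using hex
  refine ⟨γ, fun g k => nsmul_cancel n _ _ ?_⟩
  rw [← h g k, smul_add, smul_sub, ← map_nsmul, ← hγ, ← hγ, ← hγ, map_mul]
  simp only [map_sub, Module.End.mul_apply]
  abel

end Algebra

/-- If all Bernoulli shifts of the countable infinite group `G` over
standard probability spaces are `𝕋`-cocycle superrigid (i.e. `G` belongs to Popa's
class `𝒢`, e.g. if `G` has property (T)), then `H²(G, ℤG)` is torsion free as an
abelian group.  Here `ℤG` is the integral group ring, i.e. the left regular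
representation `Rep.ofMulAction ℤ G G`. -/
theorem h2_zg_torsionFree_of_bernoulli_superrigid
    (G : Type) [Group G] [Countable G] [Infinite G] (hG : InClassG G) :
    ∀ (x : groupCohomology.H2 (Rep.ofMulAction ℤ G G)) (n : ℕ), n ≠ 0 → n • x = 0 → x = 0 := by
  intro x n hn hx
  have : NeZero n := ⟨hn⟩
  induction x using groupCohomology.H2_induction_on with
  | h σ =>
    rw [← map_nsmul, groupCohomology.H2π_eq_zero_iff] at hx
    rw [groupCohomology.H2π_eq_zero_iff]
    obtain ⟨β, hβ⟩ := hx
    obtain ⟨γ, hγ⟩ := explicit hG n (fun g k => σ (g, k)) β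
      (fun g k => congrFun hβ (g, k))
    exact ⟨γ, funext fun p => hγ p.1 p.2⟩


end AlgActCohomology
end
end
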